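/- Let R be a Noetherian F-finite commutative ring of characteristic p, let (M,C) be an F-pure q-Cartier module over R and let f ∈ R. Then: (1) for every rational number t with 0 < t ≤ 1 whose denominator is prime to p (so that −t defines an element of ℤ_p via the embedding ℚ → ℚ_p), one has t ∈ FJN⁻(M,f) if and only if −t ∈ ν_f(q^∞;M); (2) 0 ∈ ν_f(q^∞;M) if and only if 0 ∈ FJN⁺(M,f). -/

import Mathlib

/-!
Since `C` is surjective, `τ(M, f^{n/q^m}) = C^m (f^n M)`. Hence `n` is a ν-invariant of level `m`
exactly when the test modules jump between `n/q^m` and `(n+1)/q^m`. A left jump at `t` lies in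
the interval `(n/q^m, (n+1)/q^m]` with `n = ⌈t q^m⌉ - 1`, for every `m`; conversely, if these `n`
are ν-invariants for infinitely many `m`, then `t` is a left jump, because the chain defining
`τ(M, f^t)` stabilizes. When `q^m ≡ 1` modulo the denominator of `t ∈ (0, 1]`, one has
`⌈t q^m⌉ - 1 = t (q^m - 1)`, which is the residue of `-t` modulo `q^m`. These levels `m` suffice,
as ν-invariants of level `m' ≥ m` reduce modulo `q^m` to ν-invariants of level `m`.
-/

open Pointwise Function

/-- The set of ν-invariants of level `m`. -/
def nuLevel {R M : Type*} [CommRing R] [AddCommGroup M] [Module R M]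
    (C : M → M) (f : R) (N : Set M) (m : ℕ) : Set ℕ :=
  {n | C^[m] '' (f ^ n • N) ≠ C^[m] '' (f ^ (n + 1) • N)}

/-- The set of ν-invariants of infinite level. -/
def nuInfinite {R M : Type*} [CommRing R] [AddCommGroup M] [Module R M]
    (p : ℕ) [Fact p.Prime] (q : ℕ) (C : M → M) (f : R) (N : Set M) : Set ℤ_[p] :=
  {α | ∀ m : ℕ, 1 ≤ m → ∃ n ∈ nuLevel C f N m, ((q : ℤ_[p]) ^ m) ∣ (α - (n : ℤ_[p]))}

/-- The test module `τ(M, f^t) = ⋃_{m ≥ 0} C^m (f^{⌈t q^m⌉} M)`. -/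
def testSet {R M : Type*} [CommRing R] [AddCommGroup M] [Module R M]
    (C : M → M) (q : ℕ) (f : R) (t : ℝ) : Set M :=
  ⋃ m : ℕ, C^[m] '' ((f ^ ⌈t * (q : ℝ) ^ m⌉₊) • (Set.univ : Set M))

/-- The set `FJN⁺(M, f)` of right F-jumping exponents. -/
def FJNplus {R M : Type*} [CommRing R] [AddCommGroup M] [Module R M]
    (C : M → M) (q : ℕ) (f : R) : Set ℝ :=
  {t | 0 ≤ t ∧ ∀ ε : ℝ, 0 < ε → testSet C q f (t + ε) ⊂ testSet C q f t}

/-- The set `FJN⁻(M, f)` of left F-jumping exponents. -/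
def FJNminus {R M : Type*} [CommRing R] [AddCommGroup M] [Module R M]
    (C : M → M) (q : ℕ) (f : R) : Set ℝ :=
  {t | 0 < t ∧ ∀ ε : ℝ, 0 < ε → ε < t → testSet C q f t ⊂ testSet C q f (t - ε)}

section CartierModules

/-- `C` is the structure map of a `q`-Cartier module over `R`. It is kept as a bare function with
a predicate, so that it applies to the maps `C` of the definitions above. -/
structure IsCartierMap (R : Type*) {M : Type*} [CommRing R] [AddCommGroup M] [Module R M]
    (q : ℕ) (C : M → M) : Prop where
  map_add : ∀ x y : M, C (x + y) = C x + C y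
  map_pow_smul : ∀ (a : R) (x : M), C (a ^ q • x) = a • C x

variable {R M : Type*} [CommRing R] [AddCommGroup M] [Module R M] {C : M → M} {q : ℕ}

theorem IsCartierMap.iterate (hC : IsCartierMap R q C) (m : ℕ) :
    IsCartierMap R (q ^ m) C^[m] where
  map_add := iterate_map_add (AddMonoidHom.mk' C hC.map_add) m
  map_pow_smul a x := by
    induction m generalizing x with
    | zero => simp
    | succ m ih =>
      rw [iterate_succ_apply, iterate_succ_apply, pow_succ, pow_mul, hC.map_pow_smul, ih]

theorem IsCartierMap.image_pow_smul (hC : IsCartierMap R q C) (a : R) (S : Set M) :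
    C '' (a ^ q • S) = a • C '' S := by
  simp only [← Set.image_smul, Set.image_image, hC.map_pow_smul]

/-- The image `C(N)` of a submodule `N` under a Cartier map, which is again a submodule. -/
def IsCartierMap.map (hC : IsCartierMap R q C) (N : Submodule R M) : Submodule R M where
  carrier := C '' N
  zero_mem' := ⟨0, N.zero_mem, (AddMonoidHom.mk' C hC.map_add).map_zero⟩
  add_mem' := by
    rintro _ _ ⟨x, hx, rfl⟩ ⟨y, hy, rfl⟩
    exact ⟨x + y, N.add_mem hx hy, hC.map_add x y⟩
  smul_mem' := by
    rintro a _ ⟨x, hx, rfl⟩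
    exact ⟨a ^ q • x, N.smul_mem _ hx, hC.map_pow_smul a x⟩

/-- The subset `C^m (f^n M)` of `M`. -/
def cartierImage (C : M → M) (f : R) (m n : ℕ) : Set M :=
  C^[m] '' (f ^ n • (Set.univ : Set M))

theorem mem_nuLevel_iff {f : R} {m n : ℕ} :
    n ∈ nuLevel C f Set.univ m ↔ cartierImage C f m n ≠ cartierImage C f m (n + 1) :=
  Iff.rfl

theorem cartierImage_antitone (C : M → M) (f : R) (m : ℕ) : Antitone (cartierImage C f m) := by
  intro n n' h
  refine Set.image_mono ?_
  rw [← Nat.add_sub_cancel' h, pow_add, mul_smul]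
  exact Set.smul_set_mono (Set.subset_univ _)

theorem image_iterate_cartierImage (C : M → M) (f : R) (k m n : ℕ) :
    C^[k] '' cartierImage C f m n = cartierImage C f (k + m) n := by
  rw [cartierImage, cartierImage, iterate_add, Set.image_comp]

theorem cartierImage_add_pow_mul (hC : IsCartierMap R q C) (f : R) (m n k : ℕ) :
    cartierImage C f m (n + q ^ m * k) = f ^ k • cartierImage C f m n := by
  rw [cartierImage, cartierImage, ← (hC.iterate m).image_pow_smul, smul_smul, ← pow_mul, ← pow_add,
    mul_comm k, add_comm n]

theorem cartierImage_add_mul_pow (hC : IsCartierMap R q C) (hsurj : Surjective C) (f : R)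
    (m k n : ℕ) : cartierImage C f (m + k) (n * q ^ k) = cartierImage C f m n := by
  rw [← image_iterate_cartierImage, cartierImage, cartierImage, pow_mul,
    (hC.iterate k).image_pow_smul, Set.image_univ_of_surjective (hsurj.iterate k)]

theorem mod_mem_nuLevel (hC : IsCartierMap R q C) {f : R} {m m' n : ℕ} (hm : m ≤ m')
    (hn : n ∈ nuLevel C f Set.univ m') : n % q ^ m ∈ nuLevel C f Set.univ m := by
  rw [mem_nuLevel_iff] at hn ⊢
  contrapose hn
  have hlevel : cartierImage C f m n = cartierImage C f m (n + 1) := by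
    rw [← Nat.mod_add_div n (q ^ m), add_right_comm, cartierImage_add_pow_mul hC,
      cartierImage_add_pow_mul hC, hn]
  rw [← Nat.sub_add_cancel hm, ← image_iterate_cartierImage, ← image_iterate_cartierImage, hlevel]

end CartierModules

section TestModules

open Filter

variable {R M : Type*} [CommRing R] [AddCommGroup M] [Module R M] {C : M → M} {q : ℕ}

theorem testSet_antitone (C : M → M) (q : ℕ) (f : R) : Antitone (testSet C q f) := fun _ _ h =>
  Set.iUnion_mono fun m => cartierImage_antitone C f m <|
    Nat.ceil_mono <| mul_le_mul_of_nonneg_right h (by positivity)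

theorem cartierImage_ceil_monotone (hC : IsCartierMap R q C) (hsurj : Surjective C) (f : R)
    (t : ℝ) : Monotone fun m : ℕ => cartierImage C f m ⌈t * (q : ℝ) ^ m⌉₊ := by
  refine monotone_nat_of_le_succ fun m => ?_
  have hceil : ⌈t * (q : ℝ) ^ (m + 1)⌉₊ ≤ ⌈t * (q : ℝ) ^ m⌉₊ * q ^ 1 := by
    rw [Nat.ceil_le, pow_succ, ← mul_assoc, pow_one, Nat.cast_mul]
    exact mul_le_mul_of_nonneg_right (Nat.le_ceil _) (Nat.cast_nonneg _)
  rw [← cartierImage_add_mul_pow hC hsurj f m 1]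
  exact cartierImage_antitone C f (m + 1) hceil

theorem eventually_testSet_eq_cartierImage [IsNoetherian R M] (hC : IsCartierMap R q C)
    (hsurj : Surjective C) (f : R) (t : ℝ) :
    ∀ᶠ m : ℕ in atTop, testSet C q f t = cartierImage C f m ⌈t * (q : ℝ) ^ m⌉₊ := by
  have hmono := cartierImage_ceil_monotone hC hsurj f t
  have hcoe (m n : ℕ) :
      ((hC.iterate m).map (f ^ n • (⊤ : Submodule R M)) : Set M) = cartierImage C f m n := by
    rw [cartierImage, ← Submodule.top_coe (R := R), ← Submodule.coe_pointwise_smul]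
    rfl
  let chain : ℕ →o Submodule R M :=
    { toFun := fun m => (hC.iterate m).map (f ^ ⌈t * (q : ℝ) ^ m⌉₊ • ⊤)
      monotone' := fun m m' h => by
        rw [← SetLike.coe_subset_coe, hcoe, hcoe]
        exact hmono h }
  obtain ⟨N, hN⟩ := monotone_stabilizes_iff_noetherian.2 ‹IsNoetherian R M› chain
  have hstab {m : ℕ} (hm : N ≤ m) :
      cartierImage C f N ⌈t * (q : ℝ) ^ N⌉₊ = cartierImage C f m ⌈t * (q : ℝ) ^ m⌉₊ := by
    rw [← hcoe, ← hcoe]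
    exact congrArg SetLike.coe (hN m hm)
  filter_upwards [eventually_ge_atTop N] with m hm
  refine (Set.iUnion_subset fun k => ?_).antisymm
    (Set.subset_iUnion (fun k : ℕ => cartierImage C f k ⌈t * (q : ℝ) ^ k⌉₊) m)
  rw [← hstab hm, hstab (le_max_right k N)]
  exact hmono (le_max_left k N)

theorem testSet_natCast_div_pow (hC : IsCartierMap R q C) (hsurj : Surjective C) (hq : 0 < q)
    (f : R) (m n : ℕ) : testSet C q f (n / (q : ℝ) ^ m) = cartierImage C f m n := by
  have hlevel (k : ℕ) :
      cartierImage C f (m + k) ⌈(n / (q : ℝ) ^ m) * (q : ℝ) ^ (m + k)⌉₊ =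
        cartierImage C f m n := by
    have hexp : (n / (q : ℝ) ^ m) * (q : ℝ) ^ (m + k) = ((n * q ^ k : ℕ) : ℝ) := by
      push_cast
      field_simp
      ring
    rw [hexp, Nat.ceil_natCast, cartierImage_add_mul_pow hC hsurj]
  refine (Set.iUnion_subset fun k => ?_).antisymm ?_
  · rw [← hlevel k]
    exact cartierImage_ceil_monotone hC hsurj f _ (Nat.le_add_left k m)
  · exact (hlevel 0).ge.trans
      (Set.subset_iUnion (fun k => cartierImage C f k ⌈(n / (q : ℝ) ^ m) * (q : ℝ) ^ k⌉₊) m)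

theorem mem_nuLevel_iff_testSet_ne (hC : IsCartierMap R q C) (hsurj : Surjective C) (hq : 0 < q)
    {f : R} {m n : ℕ} :
    n ∈ nuLevel C f Set.univ m ↔
      testSet C q f (n / (q : ℝ) ^ m) ≠ testSet C q f ((n + 1 : ℕ) / (q : ℝ) ^ m) := by
  rw [testSet_natCast_div_pow hC hsurj hq, testSet_natCast_div_pow hC hsurj hq, mem_nuLevel_iff]

end TestModules

section JumpingExponents

open Filter

variable {R M : Type*} [CommRing R] [AddCommGroup M] [Module R M] {C : M → M} {q : ℕ} {f : R}

theorem eventually_inv_pow_lt {b ε : ℝ} (hb : 1 < b) (hε : 0 < ε) :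
    ∀ᶠ m : ℕ in atTop, (b ^ m)⁻¹ < ε :=
  (tendsto_inv_atTop_zero.comp (tendsto_pow_atTop_atTop_of_one_lt hb)).eventually_lt_const hε

theorem testSet_ssubset_of_mem_FJNminus {s t : ℝ} (ht : t ∈ FJNminus C q f) (hs : 0 ≤ s)
    (hst : s < t) : testSet C q f t ⊂ testSet C q f s :=
  (ht.2 ((t - s) / 2) (by linarith) (by linarith)).trans_subset
    (testSet_antitone C q f (by linarith))

theorem ceil_sub_one_mem_nuLevel_of_mem_FJNminus (hC : IsCartierMap R q C) (hsurj : Surjective C)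
    (hq : 0 < q) {t : ℝ} (ht : t ∈ FJNminus C q f) (m : ℕ) :
    ⌈t * (q : ℝ) ^ m⌉₊ - 1 ∈ nuLevel C f Set.univ m := by
  have ht0 : 0 < t := ht.1
  have hQ : (0 : ℝ) < (q : ℝ) ^ m := by positivity
  have hceil : 0 < ⌈t * (q : ℝ) ^ m⌉₊ := Nat.ceil_pos.2 (by positivity)
  have hlt : (⌈t * (q : ℝ) ^ m⌉₊ - 1 : ℕ) / (q : ℝ) ^ m < t := by
    rw [div_lt_iff₀ hQ, ← Nat.lt_ceil]
    exact Nat.sub_one_lt_of_lt hceil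
  have hle : t ≤ ⌈t * (q : ℝ) ^ m⌉₊ / (q : ℝ) ^ m := (le_div_iff₀ hQ).2 (Nat.le_ceil _)
  rw [mem_nuLevel_iff_testSet_ne hC hsurj hq, Nat.sub_add_cancel hceil]
  intro heq
  exact (testSet_ssubset_of_mem_FJNminus ht (by positivity) hlt).not_subset
    (heq.trans_subset (testSet_antitone C q f hle))

theorem mem_FJNminus_of_frequently [IsNoetherian R M] (hC : IsCartierMap R q C)
    (hsurj : Surjective C) (hq : 1 < q) {t : ℝ} (ht : 0 < t)
    (h : ∃ᶠ m : ℕ in atTop, ⌈t * (q : ℝ) ^ m⌉₊ - 1 ∈ nuLevel C f Set.univ m) :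
    t ∈ FJNminus C q f := by
  refine ⟨ht, fun ε hε _ => ?_⟩
  obtain ⟨m, hν, hstab, hε'⟩ := (h.and_eventually
    ((eventually_testSet_eq_cartierImage hC hsurj f t).and
      (eventually_inv_pow_lt (Nat.one_lt_cast.2 hq) hε))).exists
  have hQ : (0 : ℝ) < (q : ℝ) ^ m := by positivity
  have hceil : ⌈t * (q : ℝ) ^ m⌉₊ - 1 + 1 = ⌈t * (q : ℝ) ^ m⌉₊ :=
    Nat.sub_add_cancel (Nat.ceil_pos.2 (by positivity))
  set n := ⌈t * (q : ℝ) ^ m⌉₊ - 1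
  have hle : t - ε ≤ n / (q : ℝ) ^ m := by
    have htn : t ≤ (n + 1 : ℕ) / (q : ℝ) ^ m := by
      rw [le_div_iff₀ hQ, hceil]
      exact Nat.le_ceil _
    rw [Nat.cast_succ, add_div, one_div] at htn
    linarith
  calc testSet C q f t = cartierImage C f m (n + 1) := by rw [hstab, hceil]
    _ ⊂ cartierImage C f m n :=
      (cartierImage_antitone C f m n.le_succ).lt_of_ne (mem_nuLevel_iff.1 hν).symm
    _ = testSet C q f (n / (q : ℝ) ^ m) := (testSet_natCast_div_pow hC hsurj (by lia) f m n).symm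
    _ ⊆ testSet C q f (t - ε) := testSet_antitone C q f hle

theorem natCast_div_pow_mem_FJNplus_iff (hC : IsCartierMap R q C) (hsurj : Surjective C)
    (hq : 1 < q) (l n : ℕ) :
    n / (q : ℝ) ^ l ∈ FJNplus C q f ↔ ∀ m, n * q ^ m ∈ nuLevel C f Set.univ (l + m) := by
  have hgap (m : ℕ) : n * q ^ m ∈ nuLevel C f Set.univ (l + m) ↔
      testSet C q f (n / (q : ℝ) ^ l + ((q : ℝ) ^ (l + m))⁻¹) ≠
        testSet C q f (n / (q : ℝ) ^ l) := by
    have hleft : ((n * q ^ m : ℕ) : ℝ) / (q : ℝ) ^ (l + m) = n / (q : ℝ) ^ l := by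
      push_cast
      field_simp
      ring
    rw [mem_nuLevel_iff_testSet_ne hC hsurj (by lia), Nat.cast_succ, add_div, one_div, hleft,
      ne_comm]
  simp only [hgap]
  constructor
  · rintro ⟨-, hjump⟩ m
    exact (hjump _ (by positivity)).ne
  · refine fun hne => ⟨by positivity, fun ε hε => ?_⟩
    obtain ⟨m, hm⟩ := (eventually_inv_pow_lt (Nat.one_lt_cast.2 hq) hε).exists_forall_of_atTop
    calc testSet C q f (n / (q : ℝ) ^ l + ε)
        ⊆ testSet C q f (n / (q : ℝ) ^ l + ((q : ℝ) ^ (l + m))⁻¹) :=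
          testSet_antitone C q f (by linarith [hm (l + m) (Nat.le_add_left m l)])
      _ ⊂ testSet C q f (n / (q : ℝ) ^ l) :=
          (testSet_antitone C q f (le_add_of_nonneg_right (by positivity))).lt_of_ne (hne m)

end JumpingExponents

section InfiniteLevel

open Filter

variable {R M : Type*} [CommRing R] [AddCommGroup M] [Module R M] {C : M → M} {f : R}
  {p : ℕ} [Fact p.Prime] {q e : ℕ}

theorem pow_dvd_natCast_sub_natCast_iff (hq : q = p ^ e) {m a b : ℕ} :
    (q : ℤ_[p]) ^ m ∣ (a : ℤ_[p]) - b ↔ a ≡ b [MOD q ^ m] := by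
  rw [Nat.ModEq.comm, Nat.modEq_iff_dvd, hq, ← pow_mul]
  push_cast
  rw [← pow_mul, ← PadicInt.pow_p_dvd_int_iff]
  push_cast
  rfl

theorem mem_nuInfinite_of_frequently (hC : IsCartierMap R q C) (hq : q = p ^ e) {α : ℤ_[p]}
    (h : ∃ᶠ m : ℕ in atTop, ∃ n ∈ nuLevel C f Set.univ m, (q : ℤ_[p]) ^ m ∣ α - n) :
    α ∈ nuInfinite p q C f Set.univ := by
  intro m _
  obtain ⟨m', hm, n, hn, hdvd⟩ := frequently_atTop.1 h m
  refine ⟨n % q ^ m, mod_mem_nuLevel hC hm hn, ?_⟩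
  rw [← sub_add_sub_cancel α (n : ℤ_[p])]
  exact dvd_add ((pow_dvd_pow _ hm).trans hdvd)
    ((pow_dvd_natCast_sub_natCast_iff hq).2 (Nat.mod_modEq _ _).symm)

theorem mem_nuLevel_of_mem_nuInfinite (hC : IsCartierMap R q C) (hq : q = p ^ e) {α : ℤ_[p]}
    (hα : α ∈ nuInfinite p q C f Set.univ) {m a : ℕ} (ha : a < q ^ m)
    (hdvd : (q : ℤ_[p]) ^ m ∣ α - a) : a ∈ nuLevel C f Set.univ m := by
  obtain ⟨n, hn, hdvd'⟩ := hα (m + 1) (Nat.le_add_left 1 m)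
  have hmod : n ≡ a [MOD q ^ m] := by
    rw [← pow_dvd_natCast_sub_natCast_iff hq, ← sub_sub_sub_cancel_left _ _ α]
    exact dvd_sub hdvd ((pow_dvd_pow _ m.le_succ).trans hdvd')
  rw [← Nat.mod_eq_of_modEq hmod ha]
  exact mod_mem_nuLevel hC m.le_succ hn

theorem zero_mem_nuInfinite_iff (hC : IsCartierMap R q C) (hq : q = p ^ e) :
    (0 : ℤ_[p]) ∈ nuInfinite p q C f Set.univ ↔ ∀ m, 0 ∈ nuLevel C f Set.univ m := by
  have hq0 : 0 < q := hq ▸ pow_pos (Fact.out : p.Prime).pos e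
  exact ⟨fun h m => mem_nuLevel_of_mem_nuInfinite hC hq h (pow_pos hq0 m) (by simp),
    fun h m _ => ⟨0, h m, by simp⟩⟩

end InfiniteLevel

section RationalExponents

open Filter

variable {t : ℚ} {Q : ℕ}

theorem ceil_mul_sub_one_eq (ht0 : 0 < t) (ht1 : t ≤ 1) (hQ0 : 0 < Q) (hQ : 1 ≡ Q [MOD t.den]) :
    ((⌈(t : ℝ) * Q⌉₊ - 1 : ℕ) : ℚ) = t * (Q - 1) := by
  obtain ⟨c, hc⟩ := (Nat.modEq_iff_dvd' hQ0).1 hQ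
  have hprod : ((t.num.toNat * c : ℕ) : ℚ) = t * (Q - 1) := by
    have hnum : ((t.num.toNat : ℤ) : ℚ) = t.num := by
      rw [Int.toNat_of_nonneg (Rat.num_pos.2 ht0).le]
    have hQc : (Q : ℚ) - 1 = t.den * c := by
      rw [← Nat.cast_pred hQ0, hc, Nat.cast_mul]
    rw [Nat.cast_mul, hQc, ← mul_assoc, Rat.mul_den_eq_num, ← hnum, Int.cast_natCast]
  have hceil : ⌈(t : ℝ) * Q⌉₊ = t.num.toNat * c + 1 := by
    have ht0' : (0 : ℝ) < t := Rat.cast_pos.2 ht0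
    have ht1' : (t : ℝ) ≤ 1 := by exact_mod_cast ht1
    have hprod' : ((t.num.toNat * c : ℕ) : ℝ) = t * (Q - 1) := by exact_mod_cast hprod
    rw [Nat.ceil_eq_iff (Nat.add_one_ne_zero _), Nat.add_sub_cancel, Nat.cast_succ, hprod']
    constructor <;> linarith
  rw [hceil, Nat.add_sub_cancel, hprod]

theorem ceil_mul_sub_one_lt (ht1 : t ≤ 1) (hQ0 : 0 < Q) :
    ⌈(t : ℝ) * Q⌉₊ - 1 < Q := by
  have hle : ⌈(t : ℝ) * Q⌉₊ ≤ Q :=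
    Nat.ceil_le.2 (mul_le_of_le_one_left (Nat.cast_nonneg Q) (by exact_mod_cast ht1))
  lia

theorem natCast_dvd_sub_ceil_mul_sub_one {p : ℕ} [Fact p.Prime] (ht0 : 0 < t) (ht1 : t ≤ 1)
    (hQ0 : 0 < Q) (hQ : 1 ≡ Q [MOD t.den]) {α : ℤ_[p]} (hα : (α : ℚ_[p]) = ((-t : ℚ) : ℚ_[p])) :
    (Q : ℤ_[p]) ∣ α - (⌈(t : ℝ) * Q⌉₊ - 1 : ℕ) := by
  refine ⟨α, PadicInt.ext ?_⟩
  have hcast := congrArg (Rat.cast : ℚ → ℚ_[p]) (ceil_mul_sub_one_eq ht0 ht1 hQ0 hQ)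
  rw [Rat.cast_natCast] at hcast
  push_cast at hcast hα ⊢
  rw [hcast, hα]
  ring

variable {R M : Type*} [CommRing R] [AddCommGroup M] [Module R M] {C : M → M} {f : R}
  {p : ℕ} [Fact p.Prime] {q e : ℕ}

theorem ratCast_mem_FJNminus_iff_mem_nuInfinite [IsNoetherian R M] (hC : IsCartierMap R q C)
    (hsurj : Surjective C) (hq : q = p ^ e) (he : 1 ≤ e) (ht0 : 0 < t) (ht1 : t ≤ 1)
    (htp : ¬ p ∣ t.den) {α : ℤ_[p]} (hα : (α : ℚ_[p]) = ((-t : ℚ) : ℚ_[p])) :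
    (t : ℝ) ∈ FJNminus C q f ↔ α ∈ nuInfinite p q C f Set.univ := by
  have hp : p.Prime := Fact.out
  have hq1 : 1 < q := hq ▸ Nat.one_lt_pow (by lia) hp.one_lt
  have hcop : Nat.Coprime q t.den := hq ▸ (hp.coprime_iff_not_dvd.2 htp).pow_left e
  have hmod (k : ℕ) : 1 ≡ q ^ (t.den.totient * k) [MOD t.den] := by
    simpa [pow_mul] using ((Nat.ModEq.pow_totient hcop).pow k).symm
  have hlevel (k : ℕ) : k ≤ t.den.totient * k :=
    Nat.le_mul_of_pos_left k (Nat.totient_pos.2 t.den_pos)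
  have hdvd (k : ℕ) := natCast_dvd_sub_ceil_mul_sub_one ht0 ht1 (by positivity) (hmod k) hα
  simp only [Nat.cast_pow] at hdvd
  constructor
  · refine fun hJ => mem_nuInfinite_of_frequently hC hq (frequently_atTop.2 fun k => ?_)
    exact ⟨_, hlevel k, _, ceil_sub_one_mem_nuLevel_of_mem_FJNminus hC hsurj (by lia) hJ _, hdvd k⟩
  · intro hν
    have hlt (k : ℕ) := ceil_mul_sub_one_lt ht1 (Q := q ^ (t.den.totient * k)) (by positivity)
    simp only [Nat.cast_pow] at hlt
    refine mem_FJNminus_of_frequently hC hsurj hq1 (Rat.cast_pos.2 ht0)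
      (frequently_atTop.2 fun k => ⟨_, hlevel k, ?_⟩)
    exact mem_nuLevel_of_mem_nuInfinite hC hq hν (hlt k) (hdvd k)

end RationalExponents

theorem stmt12_general {R M : Type*} [CommRing R] [AddCommGroup M] [Module R M] [IsNoetherian R M]
    (p : ℕ) [Fact p.Prime] (e q : ℕ) (he : 1 ≤ e) (hq : q = p ^ e)
    (C : M → M) (hC : IsCartierMap R q C) (hsurj : Surjective C) (f : R) :
    (∀ t : ℚ, 0 < t → t ≤ 1 → ¬ (p ∣ t.den) →
      ∀ α : ℤ_[p], (α : ℚ_[p]) = ((-t : ℚ) : ℚ_[p]) →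
        ((t : ℝ) ∈ FJNminus C q f ↔ α ∈ nuInfinite p q C f (Set.univ : Set M))) ∧
    ((0 : ℤ_[p]) ∈ nuInfinite p q C f (Set.univ : Set M) ↔ (0 : ℝ) ∈ FJNplus C q f) := by
  refine ⟨fun t ht0 ht1 htp α hα =>
    ratCast_mem_FJNminus_iff_mem_nuInfinite hC hsurj hq he ht0 ht1 htp hα, ?_⟩
  have hq1 : 1 < q := hq ▸ Nat.one_lt_pow (by lia) (Fact.out : p.Prime).one_lt
  have hzero := natCast_div_pow_mem_FJNplus_iff (f := f) hC hsurj hq1 0 0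
  simp only [Nat.cast_zero, zero_div, zero_mul, zero_add] at hzero
  rw [zero_mem_nuInfinite_iff hC hq, hzero]

theorem stmt12 {R M : Type*} [CommRing R] [AddCommGroup M] [Module R M]
    (p : ℕ) [Fact p.Prime] [CharP R p] [IsNoetherianRing R]
    (hFF : (frobenius R p).Finite)
    (e q : ℕ) (he : 1 ≤ e) (hq : q = p ^ e)
    (C : M → M) (hCadd : ∀ x y : M, C (x + y) = C x + C y)
    (hCsl : ∀ (a : R) (x : M), C (a ^ q • x) = a • C x)
    [Module.Finite R M] (hFpure : Function.Surjective C) (f : R) :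
    -- (1) for rational `t ∈ (0,1]` with denominator prime to `p`,
    -- `t ∈ FJN⁻(M,f)` iff `-t ∈ ν_f(q^∞; M)`
    (∀ t : ℚ, 0 < t → t ≤ 1 → ¬ (p ∣ t.den) →
      ∀ α : ℤ_[p], (α : ℚ_[p]) = ((-t : ℚ) : ℚ_[p]) →
        ((t : ℝ) ∈ FJNminus C q f ↔ α ∈ nuInfinite p q C f (Set.univ : Set M))) ∧
    -- (2) `0 ∈ ν_f(q^∞; M)` iff `0 ∈ FJN⁺(M,f)`
    ((0 : ℤ_[p]) ∈ nuInfinite p q C f (Set.univ : Set M) ↔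
      (0 : ℝ) ∈ FJNplus C q f) := by
  exact stmt12_general p e q he hq C ⟨hCadd, hCsl⟩ hFpure f
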